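/- For every integer d ≥ 1, ∫_{ℝ^d} J_{d/2}(‖τ‖)² / ‖τ‖^d dτ = π^{d/2} / Γ(d/2 + 1). -/

import Mathlib

open MeasureTheory Real

noncomputable section

/-- The Bessel function of the first kind `J_ν`, defined by its power series. -/
def besselJ (v x : ℝ) : ℝ :=
  ∑' k : ℕ, ((-1 : ℝ) ^ k / (Nat.factorial k * Real.Gamma ((k : ℝ) + v + 1))) *
    (x / 2) ^ (2 * (k : ℝ) + v)

/-!
On a `d`-dimensional Euclidean space the Fourier transform of the indicator of the unit ball is
`J_{d/2}(2π‖ξ‖) / ‖ξ‖^{d/2}`, so by Plancherel the integral is the volume of the unit ball.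

To compute the transform, expand `cos ⟪x, τ⟫` in its power series and integrate termwise over the
ball. The moments `∫ ⟪x, τ⟫ ^ (2k)` over the ball are those of the Gaussian `exp (-‖x‖²)` up to a
ratio of radial integrals, because `⟪x, τ⟫ ^ (2k)` is homogeneous; and the Gaussian moments are
one-dimensional because the Gaussian is a product in any orthonormal basis.
-/

open Set Metric Module FourierTransform
open scoped RealInnerProductSpace Nat

section Plancherel

variable {E F : Type*} [NormedAddCommGroup E] [InnerProductSpace ℝ E] [FiniteDimensional ℝ E]
  [MeasurableSpace E] [BorelSpace E] [NormedAddCommGroup F] [InnerProductSpace ℂ F]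
  [CompleteSpace F] {f : E → F}

theorem coeFn_fourier_toLp_ae_eq (hf₁ : Integrable f) (hf₂ : MemLp f 2) :
    (𝓕 (hf₂.toLp f) : Lp F 2) =ᵐ[volume] 𝓕 f := by
  have fourier_locallyIntegrable : LocallyIntegrable (𝓕 f) :=
    (VectorFourier.fourierIntegral_continuous continuous_fourierChar continuous_inner
      hf₁).locallyIntegrable
  refine ae_eq_of_integral_contDiff_smul_eq
    ((Lp.memLp _).locallyIntegrable one_le_two) fourier_locallyIntegrable fun g hg hgc => ?_
  let ψ : SchwartzMap E ℂ := HasCompactSupport.toSchwartzMap (f := fun x => (g x : ℂ))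
    (hgc.comp_left Complex.ofReal_zero) (Complex.ofRealCLM.contDiff.comp hg)
  have ψ_apply (x : E) : ψ x = (g x : ℂ) := rfl
  calc ∫ x, g x • 𝓕 (hf₂.toLp f) x
      = Lp.toTemperedDistribution (𝓕 (hf₂.toLp f) : Lp F 2 volume) ψ := by
        simp only [Lp.toTemperedDistribution_apply, ψ_apply, Complex.coe_smul]
    _ = ∫ x, 𝓕 ψ x • hf₂.toLp f x := by
        rw [← Lp.fourier_toTemperedDistribution_eq, TemperedDistribution.fourier_apply,
          Lp.toTemperedDistribution_apply]
    _ = ∫ x, 𝓕 ψ x • f x := by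
        refine integral_congr_ae ?_
        filter_upwards [hf₂.coeFn_toLp] with x hx
        rw [hx]
    _ = ∫ x, ψ x • 𝓕 f x := by
        simpa using! VectorFourier.integral_fourierIntegral_smul_eq_flip (L := innerₗ E)
          continuous_fourierChar continuous_inner ψ.integrable hf₁
    _ = ∫ x, g x • 𝓕 f x := by simp only [ψ_apply, Complex.coe_smul]

theorem integral_norm_fourier_sq_eq (hf₁ : Integrable f) (hf₂ : MemLp f 2) :
    ∫ ξ, ‖𝓕 f ξ‖ ^ 2 = ∫ x, ‖f x‖ ^ 2 := by
  have norm_sq_eq (g : Lp (α := E) F 2) : ‖g‖ ^ 2 = ∫ x, ‖g x‖ ^ 2 := by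
    rw [← inner_self_eq_norm_sq (𝕜 := ℂ) g, L2.inner_def, ← integral_re (L2.integrable_inner g g)]
    simp only [inner_self_eq_norm_sq]
  calc ∫ ξ, ‖𝓕 f ξ‖ ^ 2 = ∫ ξ, ‖𝓕 (hf₂.toLp f) ξ‖ ^ 2 :=
        integral_congr_ae <| (coeFn_fourier_toLp_ae_eq hf₁ hf₂).symm.fun_comp (‖·‖ ^ 2)
    _ = ∫ x, ‖hf₂.toLp f x‖ ^ 2 := by
        rw [← norm_sq_eq, Lp.norm_fourier_eq, norm_sq_eq]
    _ = ∫ x, ‖f x‖ ^ 2 := integral_congr_ae <| hf₂.coeFn_toLp.fun_comp (‖·‖ ^ 2)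

end Plancherel

section Polar

variable {E : Type*} [NormedAddCommGroup E] [NormedSpace ℝ E] [FiniteDimensional ℝ E]
  [Nontrivial E] [MeasurableSpace E] [BorelSpace E] (μ : Measure E) [μ.IsAddHaarMeasure]
  {f : E → ℝ} {m : ℕ}

theorem integral_homogeneous_mul_fun_norm (hf : ∀ r > 0, ∀ x, f (r • x) = r ^ m * f x)
    (g : ℝ → ℝ) :
    ∫ x, f x * g ‖x‖ ∂μ =
      (∫ u, f u ∂μ.toSphere) * ∫ r in Ioi (0 : ℝ), r ^ (finrank ℝ E - 1 + m) * g r :=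
  calc ∫ x, f x * g ‖x‖ ∂μ
      = ∫ x : ({0}ᶜ : Set E), f x * g ‖x.1‖ ∂μ.comap (↑) := by
        rw [integral_subtype_comap (measurableSet_singleton _).compl fun x => f x * g ‖x‖,
          restrict_compl_singleton]
    _ = ∫ p, f p.1 * (p.2.1 ^ m * g p.2) ∂μ.toSphere.prod (.volumeIoiPow (finrank ℝ E - 1)) := by
        rw [← μ.measurePreserving_homeomorphUnitSphereProd.integral_comp
          (Homeomorph.measurableEmbedding _)]
        refine integral_congr_ae (.of_forall fun x => ?_)
        have norm_pos : 0 < ‖x.1‖ := norm_pos_iff.2 x.2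
        have := hf _ norm_pos (‖x.1‖⁻¹ • x.1)
        rw [smul_inv_smul₀ norm_pos.ne'] at this
        simp only [homeomorphUnitSphereProd_apply_fst_coe, homeomorphUnitSphereProd_apply_snd_coe]
        rw [this]
        ring
    _ = (∫ u, f u ∂μ.toSphere) *
          ∫ r : Ioi (0 : ℝ), r.1 ^ m * g r ∂.volumeIoiPow (finrank ℝ E - 1) :=
        integral_prod_mul (fun u : sphere (0 : E) 1 => f u) (fun r : Ioi (0 : ℝ) => r.1 ^ m * g r)
    _ = _ := by
        congr 1
        simp only [Measure.volumeIoiPow, ENNReal.ofReal]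
        rw [integral_withDensity_eq_integral_smul
            (measurable_subtype_coe.pow_const _).real_toNNReal,
          integral_subtype_comap measurableSet_Ioi
            fun r => (r ^ (finrank ℝ E - 1)).toNNReal • (r ^ m * g r)]
        refine setIntegral_congr_fun measurableSet_Ioi fun r hr => ?_
        rw [NNReal.smul_def, Real.coe_toNNReal _ (pow_nonneg (le_of_lt hr) _), smul_eq_mul,
          pow_add, mul_assoc]

theorem integral_homogeneous_mul_exp_neg_norm_sq_eq_integral_ball
    (hf : ∀ r > 0, ∀ x, f (r • x) = r ^ m * f x) :
    ∫ x, f x * exp (-‖x‖ ^ 2) ∂μ =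
      Gamma ((finrank ℝ E + m) / 2 + 1) * ∫ x in ball 0 1, f x ∂μ := by
  have finrank_pos : 0 < finrank ℝ E := finrank_pos
  set n := finrank ℝ E - 1 + m with hn
  have hn_cast : (finrank ℝ E + m : ℝ) = n + 1 := by
    rw [hn]; push_cast [Nat.cast_sub finrank_pos]; ring
  have radial_gaussian :
      ∫ r in Ioi (0 : ℝ), r ^ n * exp (-r ^ 2) = 1 / 2 * Gamma ((n + 1) / 2) := by
    simpa using integral_rpow_mul_exp_neg_rpow two_pos (q := n)
      (neg_one_lt_zero.trans_le n.cast_nonneg)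
  have radial_ball : ∫ r in Ioi (0 : ℝ), r ^ n * (Iio 1).indicator 1 r = 1 / (n + 1) := by
    calc ∫ r in Ioi (0 : ℝ), r ^ n * (Iio 1).indicator 1 r
        = ∫ r in Ioi (0 : ℝ), (Iio 1).indicator (· ^ n) r := by
          congr with r
          simp [indicator]
      _ = ∫ r in (0 : ℝ)..1, r ^ n := by
          rw [setIntegral_indicator measurableSet_Iio, Ioi_inter_Iio,
            intervalIntegral.integral_of_le zero_le_one, integral_Ioc_eq_integral_Ioo]
      _ = 1 / (n + 1) := by simp
  have integral_ball : ∫ x in ball 0 1, f x ∂μ = ∫ x, f x * (Iio 1).indicator 1 ‖x‖ ∂μ := by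
    rw [← integral_indicator measurableSet_ball]
    congr with x
    simp [indicator]
  rw [integral_ball, integral_homogeneous_mul_fun_norm μ hf,
    integral_homogeneous_mul_fun_norm μ hf fun r => exp (-r ^ 2), ← hn, radial_gaussian,
    radial_ball, hn_cast, Gamma_add_one (by positivity)]
  field_simp

end Polar

theorem Gamma_nat_add_half_eq_factorial (k : ℕ) :
    Gamma (k + 1 / 2) = (2 * k)! * √π / (4 ^ k * k !) := by
  have duplication := Gamma_mul_Gamma_add_half (k + 1 / 2)
  rw [add_assoc, add_halves, Gamma_nat_eq_factorial, mul_add, mul_one_div_cancel two_ne_zero,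
    show (2 * k : ℝ) = (2 * k : ℕ) by push_cast; rfl, Gamma_nat_eq_factorial, sub_add_cancel_right,
    rpow_neg two_pos.le, rpow_natCast, pow_mul] at duplication
  rw [eq_div_iff (by positivity), mul_comm (4 ^ k : ℝ), ← mul_assoc, duplication]
  norm_num
  field_simp

theorem integral_pow_two_mul_mul_exp_neg_sq (k : ℕ) :
    ∫ t : ℝ, t ^ (2 * k) * exp (-t ^ 2) = Gamma (k + 1 / 2) := by
  have half_line : ∫ t in Ioi (0 : ℝ), t ^ (2 * k) * exp (-t ^ 2) = 1 / 2 * Gamma (k + 1 / 2) := by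
    have := integral_rpow_mul_exp_neg_rpow two_pos (q := (2 * k : ℕ))
      (neg_one_lt_zero.trans_le (Nat.cast_nonneg _))
    simp only [rpow_natCast, rpow_two] at this
    rw [this]
    congr 2
    push_cast
    ring
  have := integral_comp_abs (f := fun t => t ^ (2 * k) * exp (-t ^ 2))
  simp only [Even.pow_abs (even_two_mul k), sq_abs, half_line] at this
  rw [this]
  ring

section Gaussian

variable {E : Type*} [NormedAddCommGroup E] [InnerProductSpace ℝ E] [FiniteDimensional ℝ E]
  [MeasurableSpace E] [BorelSpace E]

theorem integral_fun_coord_mul_exp_neg_norm_sq {ι : Type*} [Fintype ι] (i : ι) (f : ℝ → ℝ) :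
    ∫ x : EuclideanSpace ℝ ι, f (x i) * exp (-‖x‖ ^ 2) =
      √π ^ (Fintype.card ι - 1) * ∫ t, f t * exp (-t ^ 2) := by
  classical
  let h : ι → ℝ → ℝ := fun j t => (if j = i then f t else 1) * exp (-t ^ 2)
  calc ∫ x : EuclideanSpace ℝ ι, f (x i) * exp (-‖x‖ ^ 2)
      = ∫ x : ι → ℝ, ∏ j, h j (x j) := by
        rw [← (PiLp.volume_preserving_toLp ι).integral_comp
          (MeasurableEquiv.toLp 2 _).measurableEmbedding]
        congr with x
        simp only [h, Finset.prod_mul_distrib, Finset.prod_ite_eq', Finset.mem_univ, if_true,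
          ← exp_sum, Finset.sum_neg_distrib, EuclideanSpace.norm_sq_eq, norm_eq_abs, sq_abs]
    _ = ∏ j, ∫ t, h j t := integral_fintype_prod_volume_eq_prod h
    _ = (∫ t, f t * exp (-t ^ 2)) * ∏ j ∈ Finset.univ.erase i, ∫ t, h j t := by
        rw [← Finset.mul_prod_erase _ _ (Finset.mem_univ i)]
        simp [h]
    _ = (∫ t, f t * exp (-t ^ 2)) * ∏ _j ∈ Finset.univ.erase i, √π := by
        congr 1
        refine Finset.prod_congr rfl fun _ hj => ?_
        simpa [h, Finset.ne_of_mem_erase hj] using integral_gaussian 1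
    _ = _ := by
        rw [Finset.prod_const, Finset.card_erase_of_mem (Finset.mem_univ i), Finset.card_univ,
          mul_comm]

theorem integral_fun_inner_mul_exp_neg_norm_sq {e : E} (he : ‖e‖ = 1) (f : ℝ → ℝ) :
    ∫ x, f ⟪x, e⟫ * exp (-‖x‖ ^ 2) =
      √π ^ (finrank ℝ E - 1) * ∫ t, f t * exp (-t ^ 2) := by
  have : Nontrivial E := ⟨e, 0, norm_ne_zero_iff.1 (he ▸ one_ne_zero)⟩
  let i : Fin (finrank ℝ E) := ⟨0, finrank_pos⟩
  have orthonormal_singleton : Orthonormal ℝ (({i} : Set _).domRestrict fun _ => e) :=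
    ⟨fun _ => he, fun j k hjk => (hjk (Subsingleton.elim j k)).elim⟩
  obtain ⟨b, hb⟩ := orthonormal_singleton.exists_orthonormalBasis_extension_of_card_eq (by simp)
  rw [← b.measurePreserving_repr_symm.integral_comp
    b.repr.symm.toHomeomorph.measurableEmbedding]
  have inner_repr_symm (x : EuclideanSpace ℝ (Fin (finrank ℝ E))) : ⟪b.repr.symm x, e⟫ = x i := by
    rw [← hb i rfl, real_inner_comm, ← b.repr_apply_apply, LinearIsometryEquiv.apply_symm_apply]
  simp only [inner_repr_symm, LinearIsometryEquiv.norm_map]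
  simpa using integral_fun_coord_mul_exp_neg_norm_sq i f

theorem integral_inner_pow_two_mul_mul_exp_neg_norm_sq [Nontrivial E] (τ : E) (k : ℕ) :
    ∫ x : E, ⟪x, τ⟫ ^ (2 * k) * exp (-‖x‖ ^ 2) =
      √π ^ finrank ℝ E * (2 * k)! / (4 ^ k * k !) * ‖τ‖ ^ (2 * k) := by
  obtain ⟨e, he, hτ⟩ : ∃ e : E, ‖e‖ = 1 ∧ τ = ‖τ‖ • e := by
    rcases eq_or_ne τ 0 with rfl | hτ
    · obtain ⟨e, he⟩ := exists_norm_eq E zero_le_one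
      exact ⟨e, he, by simp⟩
    · exact ⟨‖τ‖⁻¹ • τ, norm_smul_inv_norm hτ, by simp [hτ]⟩
  calc ∫ x : E, ⟪x, τ⟫ ^ (2 * k) * exp (-‖x‖ ^ 2)
      = ∫ x : E, ‖τ‖ ^ (2 * k) * (⟪x, e⟫ ^ (2 * k) * exp (-‖x‖ ^ 2)) := by
        congr with x
        rw [hτ, real_inner_smul_right, mul_pow, ← hτ, mul_assoc]
    _ = ‖τ‖ ^ (2 * k) * (√π ^ (finrank ℝ E - 1) * Gamma (k + 1 / 2)) := by
        rw [integral_const_mul, integral_fun_inner_mul_exp_neg_norm_sq he (· ^ (2 * k)),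
          integral_pow_two_mul_mul_exp_neg_sq]
    _ = _ := by
        rw [Gamma_nat_add_half_eq_factorial, ← pow_sub_one_mul finrank_pos.ne' √π]
        ring

theorem integral_ball_inner_pow_two_mul [Nontrivial E] (τ : E) (k : ℕ) :
    ∫ x in ball (0 : E) 1, ⟪x, τ⟫ ^ (2 * k) =
      √π ^ finrank ℝ E * (2 * k)! / (4 ^ k * k ! * Gamma (k + finrank ℝ E / 2 + 1)) *
        ‖τ‖ ^ (2 * k) := by
  have homogeneous : ∀ r > 0, ∀ x : E, ⟪r • x, τ⟫ ^ (2 * k) = r ^ (2 * k) * ⟪x, τ⟫ ^ (2 * k) :=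
    fun r _ x => by rw [real_inner_smul_left, mul_pow]
  have gamma_pos : 0 < Gamma (k + finrank ℝ E / 2 + 1 : ℝ) := Gamma_pos_of_pos (by positivity)
  have gaussian_eq := integral_homogeneous_mul_exp_neg_norm_sq_eq_integral_ball volume
    (f := fun x : E => ⟪x, τ⟫ ^ (2 * k)) (m := 2 * k) homogeneous
  rw [integral_inner_pow_two_mul_mul_exp_neg_norm_sq,
    show ((finrank ℝ E + (2 * k : ℕ)) / 2 + 1 : ℝ) = k + finrank ℝ E / 2 + 1 by
      push_cast; ring] at gaussian_eq
  rw [← mul_right_inj' gamma_pos.ne', ← gaussian_eq]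
  field_simp

end Gaussian

section FourierBall

variable {E : Type*} [NormedAddCommGroup E] [InnerProductSpace ℝ E] [FiniteDimensional ℝ E]
  [MeasurableSpace E] [BorelSpace E]

theorem hasSum_integral_ball_cos_inner (τ : E) :
    HasSum (fun k : ℕ => (-1) ^ k / (2 * k)! * ∫ x in ball (0 : E) 1, ⟪x, τ⟫ ^ (2 * k))
      (∫ x in ball (0 : E) 1, cos ⟪x, τ⟫) := by
  simp only [← integral_const_mul]
  refine hasSum_integral_of_dominated_convergence (fun k _ => ‖τ‖ ^ (2 * k) / (2 * k)!)
    (fun k => by fun_prop) (fun k => ?_) (.of_forall fun _ => (hasSum_cosh ‖τ‖).summable)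
    (integrableOn_const measure_ball_lt_top.ne) (.of_forall fun x => ?_)
  · filter_upwards [ae_restrict_mem measurableSet_ball] with x hx
    have inner_le : |⟪x, τ⟫| ≤ ‖τ‖ := (abs_real_inner_le_norm x τ).trans <|
      mul_le_of_le_one_left (norm_nonneg τ) (mem_ball_zero_iff.1 hx).le
    calc ‖(-1) ^ k / (2 * k)! * ⟪x, τ⟫ ^ (2 * k)‖ = |⟪x, τ⟫| ^ (2 * k) / (2 * k)! := by
          simp [div_eq_inv_mul]
      _ ≤ ‖τ‖ ^ (2 * k) / (2 * k)! := by gcongr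
  · simpa only [div_mul_eq_mul_div] using Real.hasSum_cos ⟪x, τ⟫

theorem integral_ball_cos_inner [Nontrivial E] {τ : E} (hτ : τ ≠ 0) :
    ∫ x in ball (0 : E) 1, cos ⟪x, τ⟫ =
      (2 * π / ‖τ‖) ^ (finrank ℝ E / 2 : ℝ) * besselJ (finrank ℝ E / 2) ‖τ‖ := by
  have sqrt_pow : √π ^ finrank ℝ E = π ^ (finrank ℝ E / 2 : ℝ) := by
    rw [rpow_div_two_eq_sqrt _ pi_pos.le, rpow_natCast]
  rw [← (hasSum_integral_ball_cos_inner τ).tsum_eq, besselJ, ← tsum_mul_left]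
  refine tsum_congr fun k => ?_
  have half_norm_pow : (‖τ‖ / 2) ^ (2 * k + finrank ℝ E / 2 : ℝ) =
      ‖τ‖ ^ (2 * k) / 4 ^ k * (‖τ‖ / 2) ^ (finrank ℝ E / 2 : ℝ) := by
    rw [rpow_add (by positivity), ← Nat.cast_ofNat (R := ℝ) (n := 2), ← Nat.cast_mul, rpow_natCast,
      div_pow, pow_mul (Nat.cast 2)]
    norm_num
  have scale : (2 * π / ‖τ‖) ^ (finrank ℝ E / 2 : ℝ) * (‖τ‖ / 2) ^ (finrank ℝ E / 2 : ℝ) =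
      π ^ (finrank ℝ E / 2 : ℝ) := by
    rw [← mul_rpow (by positivity) (by positivity)]
    field_simp
  rw [integral_ball_inner_pow_two_mul, half_norm_pow, sqrt_pow, ← scale]
  field_simp

theorem integral_ball_exp_inner_mul_I (τ : E) :
    ∫ x in ball (0 : E) 1, Complex.exp (⟪x, τ⟫ * Complex.I) =
      (∫ x in ball (0 : E) 1, cos ⟪x, τ⟫ : ℝ) := by
  have exp_integrable :
      IntegrableOn (fun x : E => Complex.exp (⟪x, τ⟫ * Complex.I)) (ball 0 1) :=
    (Continuous.continuousOn (by fun_prop)).integrableOn_compact (isCompact_closedBall 0 1)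
      |>.mono_set ball_subset_closedBall
  have sin_part : ∫ x in ball (0 : E) 1, sin ⟪x, τ⟫ = 0 := by
    rw [← integral_indicator measurableSet_ball, ← self_eq_neg, ← integral_neg,
      ← integral_neg_eq_self]
    congr with x
    by_cases hx : x ∈ ball (0 : E) 1 <;> simp_all
  refine Complex.ext ?_ ?_
  · simpa [Complex.exp_ofReal_mul_I_re] using (integral_re exp_integrable).symm
  · simpa [Complex.exp_ofReal_mul_I_im, sin_part] using (integral_im exp_integrable).symm

theorem fourier_indicator_ball [Nontrivial E] {ξ : E} (hξ : ξ ≠ 0) :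
    𝓕 ((ball (0 : E) 1).indicator (1 : E → ℂ)) ξ =
      (besselJ (finrank ℝ E / 2) (2 * π * ‖ξ‖) / ‖ξ‖ ^ (finrank ℝ E / 2 : ℝ) : ℝ) := by
  have norm_pos : 0 < ‖ξ‖ := norm_pos_iff.2 hξ
  have norm_smul_eq : ‖(-(2 * π)) • ξ‖ = 2 * π * ‖ξ‖ := by
    rw [norm_smul, norm_neg, norm_of_nonneg two_pi_pos.le]
  calc 𝓕 ((ball (0 : E) 1).indicator (1 : E → ℂ)) ξ
      = ∫ x in ball (0 : E) 1, Complex.exp (⟪x, (-(2 * π)) • ξ⟫ * Complex.I) := by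
        rw [fourier_eq', ← integral_indicator measurableSet_ball]
        congr with x
        by_cases hx : x ∈ ball (0 : E) 1 <;> simp [hx, real_inner_smul_right]
    _ = _ := by
        rw [integral_ball_exp_inner_mul_I, integral_ball_cos_inner (by simp [hξ]), norm_smul_eq]
        congr 1
        rw [div_mul_cancel_left₀ two_pi_pos.ne', inv_rpow norm_pos.le, inv_mul_eq_div]

theorem integral_besselJ_sq_div_norm_pow [Nontrivial E] :
    ∫ τ : E, besselJ (finrank ℝ E / 2) ‖τ‖ ^ 2 / ‖τ‖ ^ finrank ℝ E =
      volume.real (ball (0 : E) 1) := by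
  set d := finrank ℝ E
  set χ : E → ℂ := (ball (0 : E) 1).indicator 1
  have χ_memLp (p : ENNReal) : MemLp χ p :=
    memLp_indicator_const p measurableSet_ball 1 (.inr measure_ball_lt_top.ne)
  have norm_fourier_sq : ∀ᵐ ξ : E, ‖𝓕 χ ξ‖ ^ 2 =
      (2 * π) ^ d * (besselJ (d / 2) ‖(2 * π) • ξ‖ ^ 2 / ‖(2 * π) • ξ‖ ^ d) := by
    filter_upwards [compl_mem_ae_iff.2 (measure_singleton (0 : E))] with ξ hξ
    rw [fourier_indicator_ball hξ, Complex.norm_real, norm_eq_abs, sq_abs, div_pow,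
      ← rpow_mul_natCast (norm_nonneg ξ), Nat.cast_ofNat, div_mul_cancel₀ _ two_ne_zero,
      rpow_natCast, norm_smul, norm_of_nonneg two_pi_pos.le, mul_pow _ ‖ξ‖,
      ← mul_div_assoc, mul_div_mul_left _ _ (by positivity)]
  have dilation := Measure.integral_comp_smul volume
    (fun τ : E => besselJ (d / 2) ‖τ‖ ^ 2 / ‖τ‖ ^ d) (2 * π)
  calc ∫ τ : E, besselJ (d / 2) ‖τ‖ ^ 2 / ‖τ‖ ^ d
      = ∫ ξ, ‖𝓕 χ ξ‖ ^ 2 := by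
        rw [integral_congr_ae norm_fourier_sq, integral_const_mul, dilation, smul_eq_mul,
          abs_of_pos (by positivity), mul_inv_cancel_left₀ (by positivity)]
    _ = ∫ x, ‖χ x‖ ^ 2 :=
        integral_norm_fourier_sq_eq (memLp_one_iff_integrable.1 (χ_memLp 1)) (χ_memLp 2)
    _ = ∫ x, (ball (0 : E) 1).indicator 1 x := by
        congr with x
        by_cases hx : x ∈ ball (0 : E) 1 <;> simp [χ, hx]
    _ = volume.real (ball (0 : E) 1) := integral_indicator_one measurableSet_ball

theorem stmt_17_general [Nontrivial E] :
    ∫ τ : E, besselJ (finrank ℝ E / 2) ‖τ‖ ^ 2 / ‖τ‖ ^ finrank ℝ E =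
      π ^ (finrank ℝ E / 2 : ℝ) / Gamma (finrank ℝ E / 2 + 1) := by
  have : 0 < Gamma (finrank ℝ E / 2 + 1 : ℝ) := Gamma_pos_of_pos (by positivity)
  rw [integral_besselJ_sq_div_norm_pow, Measure.real, InnerProductSpace.volume_ball,
    ENNReal.ofReal_one, one_pow, one_mul, ENNReal.toReal_ofReal (by positivity),
    rpow_div_two_eq_sqrt _ pi_pos.le, rpow_natCast]

end FourierBall

/-- For every `d ≥ 1`,
`∫_{ℝ^d} J_{d/2}(‖τ‖)²/‖τ‖^d dτ = π^{d/2}/Γ(d/2+1)`. -/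
theorem stmt_17 (d : ℕ) (hd : 1 ≤ d) :
    (∫ τ : EuclideanSpace ℝ (Fin d), besselJ ((d : ℝ) / 2) ‖τ‖ ^ 2 / ‖τ‖ ^ d) =
      Real.pi ^ ((d : ℝ) / 2) / Real.Gamma ((d : ℝ) / 2 + 1) := by
  have : NeZero d := ⟨Nat.one_le_iff_ne_zero.1 hd⟩
  simpa only [finrank_euclideanSpace_fin] using stmt_17_general (E := EuclideanSpace ℝ (Fin d))

end
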